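/- A minimizer of Newton's problem has no gradient of intermediate slope: if u : Ω → [0, M] is concave and minimizes J over all concave functions v : Ω → [0, M], then at every point x ∈ Ω at which u is differentiable, the norm of the gradient satisfies |∇u(x)| ∉ (0, 1), i.e., either ∇u(x) = 0 or |∇u(x)| ≥ 1. -/

import Mathlib

/-!
Let `v` be the infimum of all affine majorants of `u` whose slope is not in `(0, 1)`; it is an
admissible competitor with `u ≤ v`. Almost everywhere on `{u < v}` the slope of `u` lies in `(0, 1)`
and that of `v` is `0` or `1`, and since
`1 / (p² + 1) + p / 2 = 1 + p (1 - p)² / (2 (p² + 1))`,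
the functional `J + TV / 2`, where `TV u = ∫ |∇u|`, is strictly smaller at `v` than at `u` unless
`u = v`. On the other hand `u` and `v` have the same boundary values, and a concave function has the
least total variation among the larger functions with its boundary values: on each line this says
that a unimodal profile has no wasted oscillation, and averaging `∫ |∂ₑu|` over all directions `e`
recovers `∫ |∇u|`. So `TV u ≤ TV v`, hence `J v < J u`. Thus a minimizer equals its hull `v`, and
a point of differentiability of `u` inherits the slope of a majorant touching there.
-/

open Set MeasureTheory

/-- The open unit disc in `ℝ²`. -/
noncomputable def Omega : Set (EuclideanSpace ℝ (Fin 2)) :=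
  Metric.ball (0 : EuclideanSpace ℝ (Fin 2)) 1

/-- Newton's resistance functional `J(u) = ∫_Ω 1/(|∇u|² + 1) dx`. -/
noncomputable def J (u : EuclideanSpace ℝ (Fin 2) → ℝ) : ℝ :=
  ∫ x in Omega, 1 / (‖gradient u x‖ ^ 2 + 1)

open scoped ENNReal Topology

section OneDimensional

variable {f g : ℝ → ℝ} {a b : ℝ} {I : Set ℝ}

lemma lintegral_enorm_deriv_le_of_monotoneOn (hab : a ≤ b) (hf : MonotoneOn f (Icc a b)) :
    ∫⁻ x in Icc a b, ‖deriv f x‖ₑ ≤ ENNReal.ofReal (f b - f a) := by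
  have hmono : MonotoneOn f (uIcc a b) := by rwa [uIcc_of_le hab]
  have hint : IntegrableOn (deriv f) (Ioo a b) :=
    (intervalIntegrable_iff_integrableOn_Ioo_of_le hab).1 hmono.intervalIntegrable_deriv
  have hnonneg : ∀ x ∈ Ioo a b, 0 ≤ deriv f x := fun x hx => by
    rw [← derivWithin_of_mem_nhds (Icc_mem_nhds hx.1 hx.2)]
    exact hf.derivWithin_nonneg
  have hle : ∫ x in Ioo a b, deriv f x ≤ f b - f a := by
    have h := hmono.intervalIntegral_deriv_mem_uIcc
    rw [uIcc_of_le (sub_nonneg.2 (hf (left_mem_Icc.2 hab) (right_mem_Icc.2 hab) hab)),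
      intervalIntegral.integral_of_le hab, integral_Ioc_eq_integral_Ioo] at h
    exact h.2
  calc ∫⁻ x in Icc a b, ‖deriv f x‖ₑ
      = ENNReal.ofReal (∫ x in Ioo a b, ‖deriv f x‖) := by
        rw [setLIntegral_congr Ioo_ae_eq_Icc.symm, ofReal_integral_norm_eq_lintegral_enorm hint]
    _ = ENNReal.ofReal (∫ x in Ioo a b, deriv f x) := by
        rw [setIntegral_congr_fun measurableSet_Ioo fun x hx => Real.norm_of_nonneg (hnonneg x hx)]
    _ ≤ ENNReal.ofReal (f b - f a) := ENNReal.ofReal_le_ofReal hle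

lemma lintegral_enorm_deriv_le_of_antitoneOn (hab : a ≤ b) (hf : AntitoneOn f (Icc a b)) :
    ∫⁻ x in Icc a b, ‖deriv f x‖ₑ ≤ ENNReal.ofReal (f a - f b) := by
  simpa only [deriv.fun_neg', enorm_neg, neg_sub_neg] using
    lintegral_enorm_deriv_le_of_monotoneOn hab hf.neg

lemma edist_le_lintegral_enorm_deriv (hab : a ≤ b) (hg : AbsolutelyContinuousOnInterval g a b) :
    edist (g b) (g a) ≤ ∫⁻ x in Icc a b, ‖deriv g x‖ₑ := by
  rw [edist_eq_enorm_sub, ← hg.integral_deriv_eq_sub, intervalIntegral.integral_of_le hab,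
    ← integral_Icc_eq_integral_Ioc]
  exact enorm_integral_le_lintegral_enorm _

lemma quasiconcaveOn_monotoneOn_of_isMaxOn {m : ℝ} (hf : QuasiconcaveOn ℝ (Icc a b) f)
    (hm : m ∈ Icc a b) (hmax : IsMaxOn f (Icc a b) m) : MonotoneOn f (Icc a m) := by
  intro x hx y hy hxy
  have hxI : x ∈ Icc a b := Icc_subset_Icc_right hm.2 hx
  exact (((hf (f x)).ordConnected.out ⟨hxI, le_rfl⟩ ⟨hm, hmax hxI⟩) ⟨hxy, hy.2⟩).2

lemma quasiconcaveOn_antitoneOn_of_isMaxOn {m : ℝ} (hf : QuasiconcaveOn ℝ (Icc a b) f)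
    (hm : m ∈ Icc a b) (hmax : IsMaxOn f (Icc a b) m) : AntitoneOn f (Icc m b) := by
  intro x hx y hy hxy
  have hyI : y ∈ Icc a b := Icc_subset_Icc_left hm.1 hy
  exact (((hf (f y)).ordConnected.out ⟨hm, hmax hyI⟩ ⟨hyI, le_rfl⟩) ⟨hx.1, hxy⟩).2

lemma exists_lintegral_enorm_deriv_le_of_quasiconcaveOn (hab : a ≤ b)
    (hf : QuasiconcaveOn ℝ (Icc a b) f) (hfc : ContinuousOn f (Icc a b)) :
    ∃ m ∈ Icc a b, ∫⁻ x in Icc a b, ‖deriv f x‖ₑ ≤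
      ENNReal.ofReal (f m - f a) + ENNReal.ofReal (f m - f b) := by
  obtain ⟨m, hm, hmax⟩ := isCompact_Icc.exists_isMaxOn (nonempty_Icc.2 hab) hfc
  refine ⟨m, hm, ?_⟩
  rw [← Icc_union_Icc_eq_Icc hm.1 hm.2]
  exact (lintegral_union_le _ _ _).trans (add_le_add
    (lintegral_enorm_deriv_le_of_monotoneOn hm.1 (quasiconcaveOn_monotoneOn_of_isMaxOn hf hm hmax))
    (lintegral_enorm_deriv_le_of_antitoneOn hm.2 (quasiconcaveOn_antitoneOn_of_isMaxOn hf hm hmax)))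

lemma edist_add_edist_le_lintegral_enorm_deriv {m : ℝ} (hm : m ∈ Icc a b)
    (hg : AbsolutelyContinuousOnInterval g a b) :
    edist (g m) (g a) + edist (g m) (g b) ≤ ∫⁻ x in Icc a b, ‖deriv g x‖ₑ := by
  have hm' : m ∈ uIcc a b := Icc_subset_uIcc hm
  rw [setLIntegral_congr Ico_ae_eq_Icc.symm, ← Ico_union_Ico_eq_Ico hm.1 hm.2,
    lintegral_union measurableSet_Ico Ico_disjoint_Ico_same, setLIntegral_congr Ico_ae_eq_Icc,
    setLIntegral_congr Ico_ae_eq_Icc, edist_comm (g m) (g b)]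
  exact add_le_add
    (edist_le_lintegral_enorm_deriv hm.1 (hg.mono (uIcc_subset_uIcc left_mem_uIcc hm')))
    (edist_le_lintegral_enorm_deriv hm.2 (hg.mono (uIcc_subset_uIcc hm' right_mem_uIcc)))

lemma lintegral_enorm_deriv_le_of_le_Icc (hab : a ≤ b) (hf : QuasiconcaveOn ℝ (Icc a b) f)
    (hfc : ContinuousOn f (Icc a b)) (hg : AbsolutelyContinuousOnInterval g a b)
    (hfg : ∀ x ∈ Icc a b, f x ≤ g x) :
    ∫⁻ x in Icc a b, ‖deriv f x‖ₑ ≤ (∫⁻ x in Icc a b, ‖deriv g x‖ₑ) +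
      (ENNReal.ofReal (g a - f a) + ENNReal.ofReal (g b - f b)) := by
  obtain ⟨m, hm, hfm⟩ := exists_lintegral_enorm_deriv_le_of_quasiconcaveOn hab hf hfc
  have hend (c : ℝ) : ENNReal.ofReal (f m - f c) ≤
      edist (g m) (g c) + ENNReal.ofReal (g c - f c) := by
    rw [edist_dist, Real.dist_eq]
    refine (ENNReal.ofReal_le_ofReal ?_).trans ENNReal.ofReal_add_le
    linarith [hfg m hm, le_abs_self (g m - g c)]
  calc ∫⁻ x in Icc a b, ‖deriv f x‖ₑ
      ≤ ENNReal.ofReal (f m - f a) + ENNReal.ofReal (f m - f b) := hfm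
    _ ≤ (edist (g m) (g a) + ENNReal.ofReal (g a - f a)) +
          (edist (g m) (g b) + ENNReal.ofReal (g b - f b)) := add_le_add (hend a) (hend b)
    _ = (edist (g m) (g a) + edist (g m) (g b)) +
          (ENNReal.ofReal (g a - f a) + ENNReal.ofReal (g b - f b)) := add_add_add_comm _ _ _ _
    _ ≤ _ := by
        gcongr
        exact edist_add_edist_le_lintegral_enorm_deriv hm hg

lemma exists_eq_Ioo_of_isOpen_of_isBounded (hI : IsOpen I) (hc : OrdConnected I)
    (hb : Bornology.IsBounded I) (hne : I.Nonempty) : ∃ a b, a < b ∧ I = Ioo a b := by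
  have hsub := IsConnected.Ioo_csInf_csSup_subset ⟨hne, hc.isPreconnected⟩ hb.bddBelow hb.bddAbove
  have heq : I = Ioo (sInf I) (sSup I) := by
    refine Subset.antisymm (fun x hx => ?_) hsub
    obtain ⟨l, u, hx, hlu⟩ := mem_nhds_iff_exists_Ioo_subset.1 (hI.mem_nhds hx)
    obtain ⟨y, hly, hyx⟩ := exists_between hx.1
    obtain ⟨z, hxz, hzu⟩ := exists_between hx.2
    exact ⟨(csInf_le hb.bddBelow (hlu ⟨hly, hyx.trans hx.2⟩)).trans_lt hyx,
      hxz.trans_le (le_csSup hb.bddAbove (hlu ⟨hx.1.trans hxz, hzu⟩))⟩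
  exact ⟨_, _, nonempty_Ioo.1 (heq ▸ hne), heq⟩

lemma eventually_left_right_mem_Ioo (hab : a < b) : ∀ᶠ p : ℝ × ℝ in 𝓝[>] a ×ˢ 𝓝[<] b,
    p.1 ≤ p.2 ∧ Icc p.1 p.2 ⊆ Ioo a b := by
  obtain ⟨m, ham, hmb⟩ := exists_between hab
  filter_upwards [Filter.prod_mem_prod (Ioo_mem_nhdsGT ham) (Ioo_mem_nhdsLT hmb)] with p ⟨hp₁, hp₂⟩
  exact ⟨(hp₁.2.trans hp₂.1).le, Icc_subset_Ioo hp₁.1 hp₂.2⟩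

lemma tendsto_lintegral_Icc_Ioo (hab : a < b) {F : ℝ → ℝ≥0∞} (hF : Measurable F) :
    Filter.Tendsto (fun p : ℝ × ℝ => ∫⁻ x in Icc p.1 p.2, F x) (𝓝[>] a ×ˢ 𝓝[<] b)
      (𝓝 (∫⁻ x in Ioo a b, F x)) := by
  have hcover : AECover (volume.restrict (Ioo a b)) (𝓝[>] a ×ˢ 𝓝[<] b)
      fun p : ℝ × ℝ => Icc p.1 p.2 :=
    aecover_Ioo_of_Icc (Filter.tendsto_fst.mono_right nhdsWithin_le_nhds)
      (Filter.tendsto_snd.mono_right nhdsWithin_le_nhds)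
  refine (hcover.lintegral_tendsto_of_countably_generated hF.aemeasurable).congr' ?_
  filter_upwards [eventually_left_right_mem_Ioo hab] with p ⟨_, hp⟩
  rw [Measure.restrict_restrict measurableSet_Icc, inter_eq_left.2 hp]

lemma lintegral_enorm_deriv_le_of_concaveOn_of_mapsTo {m M : ℝ} (hI : IsOpen I)
    (hb : Bornology.IsBounded I) (hf : ConcaveOn ℝ I f) (hfM : MapsTo f I (Icc m M)) :
    ∫⁻ x in I, ‖deriv f x‖ₑ ≤ ENNReal.ofReal (M - m) + ENNReal.ofReal (M - m) := by
  obtain rfl | hne := I.eq_empty_or_nonempty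
  · simp
  obtain ⟨a, b, hab, rfl⟩ :=
    exists_eq_Ioo_of_isOpen_of_isBounded hI hf.1.ordConnected hb hne
  refine le_of_tendsto (tendsto_lintegral_Icc_Ioo hab (measurable_deriv f).enorm) ?_
  filter_upwards [eventually_left_right_mem_Ioo hab] with p ⟨hp, hpI⟩
  obtain ⟨c, hc, hle⟩ := exists_lintegral_enorm_deriv_le_of_quasiconcaveOn hp
    (hf.subset hpI (convex_Icc _ _)).quasiconcaveOn ((hf.continuousOn hI).mono hpI)
  have hbound {x : ℝ} (hx : x ∈ Icc p.1 p.2) : f c - f x ≤ M - m := by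
    linarith [(hfM (hpI hc)).2, (hfM (hpI hx)).1]
  grw [hle, hbound (left_mem_Icc.2 hp), hbound (right_mem_Icc.2 hp)]

lemma lintegral_enorm_deriv_le_of_concaveOn_of_le (hI : IsOpen I) (hb : Bornology.IsBounded I)
    (hf : ConcaveOn ℝ I f) (hg : LocallyLipschitzOn I g) (hfg : ∀ x ∈ I, f x ≤ g x)
    (hlim : ∀ x ∈ frontier I, Filter.Tendsto (g - f) (𝓝[I] x) (𝓝 0)) :
    ∫⁻ x in I, ‖deriv f x‖ₑ ≤ ∫⁻ x in I, ‖deriv g x‖ₑ := by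
  obtain rfl | hne := I.eq_empty_or_nonempty
  · simp
  obtain ⟨a, b, hab, rfl⟩ :=
    exists_eq_Ioo_of_isOpen_of_isBounded hI hf.1.ordConnected hb hne
  rw [frontier_Ioo hab] at hlim
  have hlim_a : Filter.Tendsto (fun x => ENNReal.ofReal (g x - f x)) (𝓝[>] a) (𝓝 0) := by
    simpa [nhdsWithin_Ioo_eq_nhdsGT hab] using ENNReal.tendsto_ofReal (hlim a (by simp))
  have hlim_b : Filter.Tendsto (fun x => ENNReal.ofReal (g x - f x)) (𝓝[<] b) (𝓝 0) := by
    simpa [nhdsWithin_Ioo_eq_nhdsLT hab] using ENNReal.tendsto_ofReal (hlim b (by simp))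
  have hlim_add := ((hlim_a.comp Filter.tendsto_fst).add
    (hlim_b.comp Filter.tendsto_snd)).const_add (∫⁻ x in Ioo a b, ‖deriv g x‖ₑ)
  rw [add_zero, add_zero] at hlim_add
  refine le_of_tendsto_of_tendsto (tendsto_lintegral_Icc_Ioo hab (measurable_deriv f).enorm)
    hlim_add ?_
  filter_upwards [eventually_left_right_mem_Ioo hab] with p ⟨hp, hpI⟩
  obtain ⟨K, hK⟩ := (hg.mono hpI).exists_lipschitzOnWith_of_compact isCompact_Icc
  rw [← uIcc_of_le hp] at hK
  grw [lintegral_enorm_deriv_le_of_le_Icc hp (hf.subset hpI (convex_Icc _ _)).quasiconcaveOn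
    ((hf.continuousOn hI).mono hpI) hK.absolutelyContinuousOnInterval
    fun x hx => hfg x (hpI hx), lintegral_mono_set hpI]
  rfl

end OneDimensional

section Lines

variable {E : Type*} [AddCommGroup E] [Module ℝ E] [MeasurableSpace E] [MeasurableAdd₂ E]
  [MeasurableSMul₂ ℝ E] {μ : Measure E} [SFinite μ] [μ.IsAddRightInvariant] {F : E → ℝ≥0∞}

lemma quasiMeasurePreserving_add_smul (e : E) :
    Measure.QuasiMeasurePreserving (fun p : E × ℝ => p.1 + p.2 • e) (μ.prod volume) μ := by
  have hshear : MeasurePreserving (fun p : ℝ × E => (p.1, p.2 + p.1 • e))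
      (volume.prod μ) (volume.prod μ) :=
    (MeasurePreserving.id volume).skew_product (g := fun t x => x + t • e) (by fun_prop)
      (.of_forall fun t => map_add_right_eq_self μ (t • e))
  exact Measure.quasiMeasurePreserving_snd.comp
    (hshear.comp Measure.measurePreserving_swap).quasiMeasurePreserving

lemma lintegral_eq_lintegral_lintegral_add_smul {ℓ : E →ₗ[ℝ] ℝ} (hℓ : Measurable ℓ) {e : E}
    (he : ℓ e = 1) (hF : AEMeasurable F μ) :
    ∫⁻ x, F x ∂μ = ∫⁻ y in ℓ ⁻¹' Ico 0 1, (∫⁻ t : ℝ, F (y + t • e)) ∂μ := by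
  have hslab : MeasurableSet (ℓ ⁻¹' Ico 0 1) := hℓ measurableSet_Ico
  have hshift : Measurable fun p : E × ℝ => ℓ p.1 - p.2 :=
    (hℓ.comp measurable_fst).sub measurable_snd
  calc ∫⁻ x, F x ∂μ
      = ∫⁻ x, (∫⁻ t, ((fun t => ℓ x - t) ⁻¹' Ico 0 1).indicator (fun _ => F x) t) ∂μ := by
        refine lintegral_congr fun x => ?_
        rw [preimage_const_sub_Ico, lintegral_indicator_const measurableSet_Ioc, Real.volume_Ioc]
        simp
    _ = ∫⁻ t : ℝ, ∫⁻ x, ((fun x => ℓ x - t) ⁻¹' Ico 0 1).indicator F x ∂μ :=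
        lintegral_lintegral_swap <|
          (hF.comp_quasiMeasurePreserving Measure.quasiMeasurePreserving_fst).indicator
            (hshift measurableSet_Ico)
    _ = ∫⁻ t : ℝ, ∫⁻ x in ℓ ⁻¹' Ico 0 1, F (x + t • e) ∂μ := by
        refine lintegral_congr fun t => ?_
        rw [← lintegral_add_right_eq_self _ (t • e), ← lintegral_indicator hslab]
        simp [indicator, he]
    _ = ∫⁻ y in ℓ ⁻¹' Ico 0 1, (∫⁻ t : ℝ, F (y + t • e)) ∂μ :=
        .symm <| lintegral_lintegral_swap (f := fun y t => F (y + t • e)) <|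
          hF.comp_quasiMeasurePreserving <| (quasiMeasurePreserving_add_smul e).mono_left <|
            Measure.restrict_le_self.absolutelyContinuous.prod .rfl

end Lines

section DirectionalVariation

lemma lineDeriv_add_smul {E F : Type*} [AddCommGroup E] [Module ℝ E] [NormedAddCommGroup F]
    [NormedSpace ℝ F] (f : E → F) (y e : E) (t : ℝ) :
    lineDeriv ℝ f (y + t • e) e = deriv (fun s => f (y + s • e)) t := by
  simp only [lineDeriv, add_assoc, ← add_smul]
  rw [deriv_comp_const_add (fun s => f (y + s • e)), add_zero]

lemma concaveOn_comp_add_smul {E : Type*} [AddCommGroup E] [Module ℝ E] {Ω : Set E} {f : E → ℝ}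
    (hf : ConcaveOn ℝ Ω f) (y e : E) :
    ConcaveOn ℝ ((fun t : ℝ => y + t • e) ⁻¹' Ω) fun t => f (y + t • e) := by
  have hline : (fun t : ℝ => y + t • e) = AffineMap.lineMap y (y + e) := by
    ext t
    simp [AffineMap.lineMap_apply, add_comm]
  have hcomp := hf.comp_affineMap (AffineMap.lineMap y (y + e) : ℝ →ᵃ[ℝ] E)
  rwa [← hline] at hcomp

lemma isBounded_preimage_add_smul {E : Type*} [NormedAddCommGroup E] [NormedSpace ℝ E] {Ω : Set E}
    (hb : Bornology.IsBounded Ω) (y : E) {e : E} (he : e ≠ 0) :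
    Bornology.IsBounded ((fun t : ℝ => y + t • e) ⁻¹' Ω) := by
  refine AntilipschitzWith.isBounded_preimage (K := ‖e‖₊⁻¹) (.of_le_mul_dist fun s t => ?_) hb
  have : ‖e‖ ≠ 0 := norm_ne_zero_iff.2 he
  simp [dist_eq_norm, ← sub_smul, norm_smul, field]

lemma isBounded_setOf_exists_add_smul_mem {E : Type*} [NormedAddCommGroup E] [NormedSpace ℝ E]
    {Ω : Set E} (hb : Bornology.IsBounded Ω) {ℓ : E →L[ℝ] ℝ} {e : E} (he : ℓ e = 1) :
    Bornology.IsBounded {y | ℓ y ∈ Ico 0 1 ∧ ∃ t : ℝ, y + t • e ∈ Ω} := by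
  obtain ⟨R, hR⟩ := hb.exists_norm_le
  refine isBounded_iff_forall_norm_le.2 ⟨R + (‖ℓ‖ * R + 1) * ‖e‖, fun y ⟨⟨hy₀, hy₁⟩, t, ht⟩ => ?_⟩
  have htℓ : t = ℓ (y + t • e) - ℓ y := by simp [he]
  have ht_le : |t| ≤ ‖ℓ‖ * R + 1 := by
    rw [htℓ]
    refine (abs_sub _ _).trans (add_le_add (ℓ.le_opNorm_of_le (hR _ ht)) ?_)
    rw [abs_of_nonneg hy₀]
    exact hy₁.le
  calc ‖y‖ = ‖(y + t • e) - t • e‖ := by rw [add_sub_cancel_right]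
    _ ≤ ‖y + t • e‖ + |t| * ‖e‖ := (norm_sub_le _ _).trans_eq (by rw [norm_smul, Real.norm_eq_abs])
    _ ≤ R + (‖ℓ‖ * R + 1) * ‖e‖ := by grw [hR _ ht, ht_le]

lemma locallyLipschitzOn_comp {X Y Z : Type*} [PseudoEMetricSpace X] [PseudoEMetricSpace Y]
    [PseudoEMetricSpace Z] {g : Y → Z} {h : X → Y} {s : Set Y} (hg : LocallyLipschitzOn s g)
    (hh : LocallyLipschitz h) : LocallyLipschitzOn (h ⁻¹' s) (g ∘ h) := by
  intro x hx
  obtain ⟨Kg, t, ht, hgt⟩ := hg hx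
  obtain ⟨Kh, u, hu, hhu⟩ := hh x
  exact ⟨Kg * Kh, _, Filter.inter_mem (hh.continuous.continuousWithinAt.tendsto_nhdsWithin
      (mapsTo_preimage h s) ht) (mem_nhdsWithin_of_mem_nhds hu),
    hgt.comp (hhu.mono inter_subset_right) fun _ hy => hy.1⟩

variable {E : Type*} [NormedAddCommGroup E] [NormedSpace ℝ E] [FiniteDimensional ℝ E]
  [MeasurableSpace E] [BorelSpace E] {μ : Measure E} [μ.IsAddHaarMeasure]
  {Ω : Set E} {f g : E → ℝ}

lemma ae_differentiableAt_of_locallyLipschitzOn {F : Type*} [NormedAddCommGroup F]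
    [NormedSpace ℝ F] [FiniteDimensional ℝ F] {f : E → F} (hΩ : IsOpen Ω)
    (hf : LocallyLipschitzOn Ω f) : ∀ᵐ x ∂μ.restrict Ω, DifferentiableAt ℝ f x := by
  rw [ae_restrict_iff' hΩ.measurableSet, ae_iff]
  refine measure_null_of_locally_null _ fun x hx => ?_
  have hxΩ : x ∈ Ω := (Classical.not_imp.1 hx).1
  obtain ⟨K, s, hs, hKs⟩ := hf hxΩ
  rw [hΩ.nhdsWithin_eq hxΩ] at hs
  refine ⟨_, inter_mem_nhdsWithin _ (interior_mem_nhds.2 hs), ?_⟩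
  refine measure_mono_null ?_ (ae_iff.1 hKs.ae_differentiableWithinAt_of_mem)
  rintro y ⟨hy, hys⟩ hdiff
  have hsy : s ∈ 𝓝 y := mem_interior_iff_mem_nhds.1 hys
  exact (Classical.not_imp.1 hy).2 ((hdiff (mem_of_mem_nhds hsy)).differentiableAt hsy)

lemma enorm_lineDeriv_ae_eq_enorm_fderiv (hΩ : IsOpen Ω) (hf : LocallyLipschitzOn Ω f) (e : E) :
    (fun x => ‖lineDeriv ℝ f x e‖ₑ) =ᵐ[μ.restrict Ω] fun x => ‖fderiv ℝ f x e‖ₑ := by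
  filter_upwards [ae_differentiableAt_of_locallyLipschitzOn hΩ hf] with x hx
  rw [hx.lineDeriv_eq_fderiv]

lemma lintegral_enorm_fderiv_apply_eq (hΩ : IsOpen Ω) (hf : LocallyLipschitzOn Ω f)
    {ℓ : E →L[ℝ] ℝ} {e : E} (he : ℓ e = 1) :
    ∫⁻ x in Ω, ‖fderiv ℝ f x e‖ₑ ∂μ = ∫⁻ y in ℓ ⁻¹' Ico 0 1,
      (∫⁻ t in (fun t : ℝ => y + t • e) ⁻¹' Ω, ‖deriv (fun s => f (y + s • e)) t‖ₑ) ∂μ := by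
  have hae := enorm_lineDeriv_ae_eq_enorm_fderiv (μ := μ) hΩ hf e
  have hmeas : AEMeasurable (fun x => ‖lineDeriv ℝ f x e‖ₑ) (μ.restrict Ω) :=
    ⟨_, (measurable_fderiv_apply_const ℝ f e).enorm, hae⟩
  rw [← lintegral_congr_ae hae, ← lintegral_indicator hΩ.measurableSet,
    lintegral_eq_lintegral_lintegral_add_smul (ℓ := (ℓ : E →ₗ[ℝ] ℝ)) ℓ.continuous.measurable he
      ((aemeasurable_indicator_iff hΩ.measurableSet).2 hmeas)]
  refine lintegral_congr fun y => ?_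
  rw [← lintegral_indicator (hΩ.preimage (by fun_prop)).measurableSet]
  simp_rw [← lineDeriv_add_smul]
  rfl

lemma lintegral_enorm_fderiv_apply_le_of_concaveOn_of_le (hΩ : IsOpen Ω)
    (hb : Bornology.IsBounded Ω) (hf : ConcaveOn ℝ Ω f) (hg : LocallyLipschitzOn Ω g)
    (hfg : ∀ x ∈ Ω, f x ≤ g x)
    (hlim : ∀ x ∈ frontier Ω, Filter.Tendsto (g - f) (𝓝[Ω] x) (𝓝 0)) (e : E) :
    ∫⁻ x in Ω, ‖fderiv ℝ f x e‖ₑ ∂μ ≤ ∫⁻ x in Ω, ‖fderiv ℝ g x e‖ₑ ∂μ := by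
  obtain rfl | he := eq_or_ne e 0
  · simp
  obtain ⟨ℓ, hℓ⟩ := SeparatingDual.exists_eq_one (R := ℝ) he
  rw [lintegral_enorm_fderiv_apply_eq hΩ (hf.locallyLipschitzOn hΩ) hℓ,
    lintegral_enorm_fderiv_apply_eq hΩ hg hℓ]
  refine lintegral_mono fun y => ?_
  have hline : Continuous fun t : ℝ => y + t • e := by fun_prop
  refine lintegral_enorm_deriv_le_of_concaveOn_of_le (hΩ.preimage hline)
    (isBounded_preimage_add_smul hb y he) (concaveOn_comp_add_smul hf y e) ?_ (fun t => hfg _) ?_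
  · exact locallyLipschitzOn_comp hg ((LipschitzWith.const y).add
      (ContinuousLinearMap.toSpanSingleton ℝ e).lipschitz).locallyLipschitz
  · intro t ht
    exact (hlim _ (hline.frontier_preimage_subset _ ht)).comp
      (hline.continuousAt.continuousWithinAt.tendsto_nhdsWithin (mapsTo_preimage _ _))

lemma lintegral_enorm_fderiv_apply_lt_top (hΩ : IsOpen Ω) (hb : Bornology.IsBounded Ω) {m M : ℝ}
    (hf : ConcaveOn ℝ Ω f) (hfM : MapsTo f Ω (Icc m M)) (e : E) :
    ∫⁻ x in Ω, ‖fderiv ℝ f x e‖ₑ ∂μ < ⊤ := by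
  obtain rfl | he := eq_or_ne e 0
  · simp
  obtain ⟨ℓ, hℓ⟩ := SeparatingDual.exists_eq_one (R := ℝ) he
  set K := ENNReal.ofReal (M - m) + ENNReal.ofReal (M - m)
  set B := {y : E | ℓ y ∈ Ico 0 1 ∧ ∃ t : ℝ, y + t • e ∈ Ω}
  have hslice (y : E) (hy : y ∈ ℓ ⁻¹' Ico 0 1) :
      ∫⁻ t in (fun t : ℝ => y + t • e) ⁻¹' Ω, ‖deriv (fun s => f (y + s • e)) t‖ₑ ≤
        B.indicator (fun _ => K) y := by
    obtain hempty | ⟨t, ht⟩ := ((fun t : ℝ => y + t • e) ⁻¹' Ω).eq_empty_or_nonempty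
    · simp [hempty]
    rw [indicator_of_mem (show y ∈ B from ⟨hy, t, ht⟩)]
    exact lintegral_enorm_deriv_le_of_concaveOn_of_mapsTo (hΩ.preimage (by fun_prop))
      (isBounded_preimage_add_smul hb y he) (concaveOn_comp_add_smul hf y e) fun t ht => hfM ht
  calc ∫⁻ x in Ω, ‖fderiv ℝ f x e‖ₑ ∂μ
      = ∫⁻ y in ℓ ⁻¹' Ico 0 1,
          (∫⁻ t in (fun t : ℝ => y + t • e) ⁻¹' Ω, ‖deriv (fun s => f (y + s • e)) t‖ₑ) ∂μ :=
        lintegral_enorm_fderiv_apply_eq hΩ (hf.locallyLipschitzOn hΩ) hℓ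
    _ ≤ ∫⁻ y in ℓ ⁻¹' Ico 0 1, B.indicator (fun _ => K) y ∂μ :=
        setLIntegral_mono' (ℓ.continuous.measurable measurableSet_Ico) hslice
    _ ≤ ∫⁻ y, B.indicator (fun _ => K) y ∂μ := setLIntegral_le_lintegral _ _
    _ ≤ K * μ B := lintegral_indicator_const_le B K
    _ < ⊤ := ENNReal.mul_lt_top (by simp [K])
        (isBounded_setOf_exists_add_smul_mem hb hℓ).measure_lt_top

lemma lintegral_enorm_fderiv_lt_top (hΩ : IsOpen Ω) (hb : Bornology.IsBounded Ω) {m M : ℝ}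
    (hf : ConcaveOn ℝ Ω f) (hfM : MapsTo f Ω (Icc m M)) :
    ∫⁻ x in Ω, ‖fderiv ℝ f x‖ₑ ∂μ < ⊤ := by
  let b := Module.finBasis ℝ E
  obtain ⟨C, -, hC⟩ := b.exists_opNNNorm_le (F := ℝ)
  have hle (φ : E →L[ℝ] ℝ) : ‖φ‖ₑ ≤ C * ∑ i, ‖φ (b i)‖ₑ := by
    simp only [enorm]
    exact_mod_cast hC (∑ i, ‖φ (b i)‖₊) fun i =>
      Finset.single_le_sum_of_canonicallyOrdered (f := fun i => ‖φ (b i)‖₊) (Finset.mem_univ i)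
  calc ∫⁻ x in Ω, ‖fderiv ℝ f x‖ₑ ∂μ
      ≤ ∫⁻ x in Ω, C * ∑ i, ‖fderiv ℝ f x (b i)‖ₑ ∂μ := lintegral_mono fun x => hle _
    _ = C * ∑ i, ∫⁻ x in Ω, ‖fderiv ℝ f x (b i)‖ₑ ∂μ := by
        rw [lintegral_const_mul' _ _ ENNReal.coe_ne_top, lintegral_finsetSum]
        exact fun i _ => (measurable_fderiv_apply_const ℝ f (b i)).enorm
    _ < ⊤ := ENNReal.mul_lt_top ENNReal.coe_lt_top <| ENNReal.sum_lt_top.2 fun i _ =>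
        lintegral_enorm_fderiv_apply_lt_top hΩ hb hf hfM (b i)

end DirectionalVariation

section Averaging

variable {E : Type*} [NormedAddCommGroup E] [InnerProductSpace ℝ E] [FiniteDimensional ℝ E]
  [MeasurableSpace E] [BorelSpace E]

lemma lintegral_ball_enorm_inner_eq {p q : E} (hq : ‖q‖ = 1) :
    ∫⁻ e in Metric.ball (0 : E) 1, ‖inner ℝ p e‖ₑ =
      (∫⁻ e in Metric.ball (0 : E) 1, ‖inner ℝ q e‖ₑ) * ‖p‖ₑ := by
  let R := (ℝ ∙ (p - ‖p‖ • q))ᗮ.reflection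
  have hRp : R p = ‖p‖ • q := Submodule.reflection_sub (by simp [norm_smul, hq])
  have hinner (e : E) : ‖inner ℝ p e‖ₑ = ‖inner ℝ q (R e)‖ₑ * ‖p‖ₑ := by
    rw [← R.inner_map_map, hRp, real_inner_smul_left, enorm_mul, enorm_norm, mul_comm]
  have hball : R ⁻¹' Metric.ball 0 1 = Metric.ball 0 1 := by simp
  simp_rw [hinner]
  rw [lintegral_mul_const' _ _ enorm_ne_top]
  conv_lhs => rw [← hball]
  rw [R.measurePreserving.setLIntegral_comp_preimage_emb
    R.toHomeomorph.measurableEmbedding (fun e => ‖inner ℝ q e‖ₑ)]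

lemma exists_lintegral_ball_enorm_apply_eq (E : Type*) [NormedAddCommGroup E]
    [InnerProductSpace ℝ E] [FiniteDimensional ℝ E] [MeasurableSpace E] [BorelSpace E] :
    ∃ C : ℝ≥0∞, C ≠ 0 ∧ C ≠ ⊤ ∧ ∀ φ : E →L[ℝ] ℝ,
      ∫⁻ e in Metric.ball (0 : E) 1, ‖φ e‖ₑ = C * ‖φ‖ₑ := by
  cases subsingleton_or_nontrivial E
  · exact ⟨1, one_ne_zero, ENNReal.one_ne_top, fun φ => by
      simp [Subsingleton.elim φ 0, ← ofReal_norm]⟩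
  obtain ⟨q, hq⟩ := exists_norm_eq E zero_le_one
  refine ⟨∫⁻ e in Metric.ball (0 : E) 1, ‖inner ℝ q e‖ₑ, ?_, ?_, fun φ => ?_⟩
  · rw [← pos_iff_ne_zero, setLIntegral_pos_iff (by fun_prop)]
    refine IsOpen.measure_pos _ ?_ ⟨(2⁻¹ : ℝ) • q, ?_, ?_⟩
    · exact (isOpen_ne_fun (by fun_prop) continuous_const).inter Metric.isOpen_ball
    · simp [real_inner_smul_right, hq]
    · simp only [mem_ball_zero_iff, norm_smul, hq]
      norm_num
  · refine (setLIntegral_lt_top_of_le_nnreal measure_ball_lt_top.ne ⟨1, fun e he => ?_⟩).ne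
    rw [← ofReal_norm, ENNReal.coe_one]
    refine ENNReal.ofReal_le_one.2 ((norm_inner_le_norm q e).trans ?_)
    simpa [hq] using (mem_ball_zero_iff.1 he).le
  · obtain ⟨p, rfl⟩ := (InnerProductSpace.toDual ℝ E).surjective φ
    simpa using lintegral_ball_enorm_inner_eq hq

lemma lintegral_enorm_le_of_forall_apply_le {X : Type*} [MeasurableSpace X] {ν : Measure X}
    [SFinite ν] {φ ψ : X → E →L[ℝ] ℝ} (hφ : Measurable φ) (hψ : Measurable ψ)
    (hle : ∀ e, ∫⁻ x, ‖φ x e‖ₑ ∂ν ≤ ∫⁻ x, ‖ψ x e‖ₑ ∂ν) :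
    ∫⁻ x, ‖φ x‖ₑ ∂ν ≤ ∫⁻ x, ‖ψ x‖ₑ ∂ν := by
  obtain ⟨C, hC₀, hC, hCφ⟩ := exists_lintegral_ball_enorm_apply_eq E
  have haverage {φ : X → E →L[ℝ] ℝ} (hφ : Measurable φ) :
      C * ∫⁻ x, ‖φ x‖ₑ ∂ν = ∫⁻ e in Metric.ball (0 : E) 1, (∫⁻ x, ‖φ x e‖ₑ ∂ν) := by
    rw [← lintegral_const_mul' _ _ hC]
    simp_rw [← hCφ]
    refine lintegral_lintegral_swap (Measurable.aemeasurable ?_)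
    exact (isBoundedBilinearMap_apply.continuous.measurable.comp
      ((hφ.comp measurable_fst).prodMk measurable_snd)).enorm
  rw [← ENNReal.mul_le_mul_iff_right hC₀ hC, haverage hφ, haverage hψ]
  exact lintegral_mono hle

end Averaging

section Support

variable {E : Type*} [NormedAddCommGroup E] [NormedSpace ℝ E] {Ω : Set E} {u v : E → ℝ} {x : E}

lemma fderiv_eq_of_le_of_eq (hΩ : IsOpen Ω) (hx : x ∈ Ω) (hu : DifferentiableAt ℝ u x)
    (hv : DifferentiableAt ℝ v x) (huv : ∀ y ∈ Ω, u y ≤ v y) (heq : u x = v x) :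
    fderiv ℝ u x = fderiv ℝ v x := by
  have hmin : IsLocalMin (v - u) x := by
    filter_upwards [hΩ.mem_nhds hx] with y hy
    simpa only [Pi.sub_apply, heq, sub_self] using sub_nonneg.2 (huv y hy)
  rw [eq_comm, ← sub_eq_zero, ← fderiv_sub hv hu, hmin.fderiv_eq_zero]

lemma fderiv_eq_of_le_affine (hΩ : IsOpen Ω) (hx : x ∈ Ω) (hu : DifferentiableAt ℝ u x)
    {p : E →L[ℝ] ℝ} {c : ℝ} (hle : ∀ y ∈ Ω, u y ≤ p y + c) (heq : u x = p x + c) :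
    fderiv ℝ u x = p := by
  have hp : HasFDerivAt (fun y => p y + c) p x := p.hasFDerivAt.add_const c
  rw [fderiv_eq_of_le_of_eq hΩ hx hu hp.differentiableAt hle heq, hp.fderiv]

lemma isOpen_strict_hypograph {X : Type*} [TopologicalSpace X] {s : Set X} {f : X → ℝ}
    (hs : IsOpen s) (hf : ContinuousOn f s) : IsOpen {q : X × ℝ | q.1 ∈ s ∧ q.2 < f q.1} := by
  have hcont : ContinuousOn (fun q : X × ℝ => f q.1 - q.2) (Prod.fst ⁻¹' s) :=
    (hf.comp continuousOn_fst fun _ hq => hq).sub continuousOn_snd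
  convert hcont.isOpen_inter_preimage (hs.preimage continuous_fst) isOpen_Ioi (t := Ioi 0) using 1
  ext q
  simp

lemma exists_norm_eq_one_forall_lt (hΩ : IsOpen Ω) (hconv : Convex ℝ Ω) (hne : Ω.Nonempty)
    (hx : x ∉ Ω) : ∃ z : E →L[ℝ] ℝ, ‖z‖ = 1 ∧ ∀ y ∈ Ω, z y < z x := by
  obtain ⟨z, hz⟩ := geometric_hahn_banach_open_point hconv hΩ hx
  obtain ⟨y, hy⟩ := hne
  have hz₀ : z ≠ 0 := by
    rintro rfl
    exact lt_irrefl _ (hz y hy)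
  refine ⟨‖z‖⁻¹ • z, by simp [norm_smul, hz₀], fun y hy => ?_⟩
  exact mul_lt_mul_of_pos_left (hz y hy) (inv_pos.2 (norm_pos_iff.2 hz₀))

lemma exists_affine_ge_of_concaveOn [FiniteDimensional ℝ E]
    (hΩ : IsOpen Ω) (hu : ConcaveOn ℝ Ω u) (hx : x ∈ Ω) :
    ∃ (p : E →L[ℝ] ℝ) (c : ℝ), (∀ y ∈ Ω, u y ≤ p y + c) ∧ u x = p x + c := by
  obtain ⟨L, hL⟩ := geometric_hahn_banach_open_point hu.convex_strict_hypograph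
    (isOpen_strict_hypograph hΩ (hu.continuousOn hΩ)) (x := (x, u x)) (by simp)
  have hsplit (y : E) (t : ℝ) : L (y, t) = L (y, 0) + t * L (0, 1) := by
    rw [← smul_eq_mul, ← map_smul, ← map_add]
    simp
  have hpos : 0 < L (0, 1) := by
    have h := hL (x, u x - 1) ⟨hx, sub_one_lt _⟩
    rw [hsplit x (u x), hsplit x (u x - 1)] at h
    linarith
  refine ⟨-(L (0, 1))⁻¹ • L.comp (.inl ℝ E ℝ), u x + (L (0, 1))⁻¹ * L (x, 0),
    fun y hy => le_of_forall_lt fun t ht => ?_, by simp⟩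
  have hlt := hL (y, t) ⟨hy, ht⟩
  rw [hsplit y t, hsplit x (u x)] at hlt
  simp only [smul_apply, ContinuousLinearMap.comp_apply, ContinuousLinearMap.inl_apply,
    smul_eq_mul]
  field_simp
  linarith

end Support

section SteepHull

variable {E : Type*} [NormedAddCommGroup E] [NormedSpace ℝ E] {Ω : Set E} {u : E → ℝ} {m M : ℝ}
  {x : E}

/-- The affine functions `y ↦ p y + c`, encoded as pairs `(p, c)`, which lie above `u` on `Ω` and
whose slope `‖p‖` is not in `(0, 1)`. -/
def steepMajorants (Ω : Set E) (u : E → ℝ) : Set ((E →L[ℝ] ℝ) × ℝ) :=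
  {q | ‖q.1‖ ∉ Ioo 0 1 ∧ ∀ y ∈ Ω, u y ≤ q.1 y + q.2}

/-- The infimum of the affine majorants of `u` on `Ω` whose slope is not in `(0, 1)`: the competitor
which beats a function with gradients of intermediate slope. Its value outside `Ω` is irrelevant. -/
noncomputable def steepHull (Ω : Set E) (u : E → ℝ) (x : E) : ℝ :=
  sInf ((fun q : (E →L[ℝ] ℝ) × ℝ => q.1 x + q.2) '' steepMajorants Ω u)

lemma zero_mem_steepMajorants (hu : MapsTo u Ω (Icc m M)) : (0, M) ∈ steepMajorants Ω u :=
  ⟨by simp, fun y hy => by simpa using (hu hy).2⟩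

lemma isClosed_steepMajorants (Ω : Set E) (u : E → ℝ) : IsClosed (steepMajorants Ω u) := by
  have hslope : IsClosed {q : (E →L[ℝ] ℝ) × ℝ | ‖q.1‖ ∉ Ioo 0 1} :=
    (isOpen_Ioo.preimage continuous_fst.norm).isClosed_compl
  have hmajorant (y : E) : IsClosed {q : (E →L[ℝ] ℝ) × ℝ | u y ≤ q.1 y + q.2} :=
    isClosed_le continuous_const (by fun_prop)
  convert hslope.inter (isClosed_biInter fun y (_ : y ∈ Ω) => hmajorant y) using 1
  ext q
  simp [steepMajorants]

lemma steepHull_le (hx : x ∈ Ω) {q : (E →L[ℝ] ℝ) × ℝ} (hq : q ∈ steepMajorants Ω u) :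
    steepHull Ω u x ≤ q.1 x + q.2 :=
  csInf_le ⟨u x, forall_mem_image.2 fun _ hq' => hq'.2 x hx⟩ (mem_image_of_mem _ hq)

lemma le_steepHull (hu : MapsTo u Ω (Icc m M)) (hx : x ∈ Ω) : u x ≤ steepHull Ω u x :=
  le_csInf (Nonempty.image _ ⟨_, zero_mem_steepMajorants hu⟩)
    (forall_mem_image.2 fun _ hq => hq.2 x hx)

lemma mapsTo_steepHull (hu : MapsTo u Ω (Icc m M)) : MapsTo (steepHull Ω u) Ω (Icc m M) :=
  fun x hx => ⟨(hu hx).1.trans (le_steepHull hu hx),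
    by simpa using steepHull_le hx (zero_mem_steepMajorants hu)⟩

/- If `1 < ‖p‖`, tilting `p` slightly towards a supporting function of `u` at `x` keeps the slope
above one but decreases the value at `x`. -/
lemma norm_eq_zero_or_eq_one_of_lt_steepHull {p p₀ : E →L[ℝ] ℝ} {c c₀ : ℝ} (hx : x ∈ Ω)
    (hlt : u x < steepHull Ω u x) (hp : (p, c) ∈ steepMajorants Ω u)
    (hpx : steepHull Ω u x = p x + c) (hp₀ : ∀ y ∈ Ω, u y ≤ p₀ y + c₀)
    (hp₀x : u x = p₀ x + c₀) : ‖p‖ = 0 ∨ ‖p‖ = 1 := by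
  rcases (norm_nonneg p).eq_or_lt with h₀ | h₀
  · exact .inl h₀.symm
  refine .inr ((not_lt.1 fun h => hp.1 ⟨h₀, h⟩).eq_or_lt.resolve_right fun h₁ => ?_).symm
  have hcont : Continuous fun t : ℝ => ‖(1 - t) • p + t • p₀‖ := by fun_prop
  have hsteep : ∀ᶠ t in 𝓝[>] (0 : ℝ), 1 < ‖(1 - t) • p + t • p₀‖ :=
    nhdsWithin_le_nhds (hcont.continuousAt.eventually_const_lt (by simpa using h₁))
  obtain ⟨t, ht, ht₀, ht₁⟩ := (hsteep.and (Ioo_mem_nhdsGT one_pos)).exists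
  have hq : ((1 - t) • p + t • p₀, (1 - t) * c + t * c₀) ∈ steepMajorants Ω u := by
    refine ⟨fun h => ht.not_gt h.2, fun y hy => ?_⟩
    calc u y = (1 - t) * u y + t * u y := by ring
      _ ≤ (1 - t) * (p y + c) + t * (p₀ y + c₀) := by
        gcongr
        exacts [hp.2 y hy, hp₀ y hy]
      _ = ((1 - t) • p + t • p₀) y + ((1 - t) * c + t * c₀) := by
        simp only [add_apply, smul_apply, smul_eq_mul]
        ring
  have hle := steepHull_le hx hq
  simp only [add_apply, smul_apply, smul_eq_mul] at hle
  nlinarith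

lemma norm_le_of_affine_ge {p : E →L[ℝ] ℝ} {c r : ℝ} (hr : 0 < r)
    (hge : ∀ y ∈ Metric.closedBall x r, m ≤ p y + c) (hle : p x + c ≤ M) :
    ‖p‖ ≤ (M - m) / r := by
  refine ContinuousLinearMap.opNorm_bound_of_ball_bound hr _ p fun z hz => ?_
  rw [mem_closedBall_zero_iff] at hz
  have hadd := hge (x + z) (by simpa using hz)
  have hsub := hge (x - z) (by simpa using hz)
  rw [map_add] at hadd
  rw [map_sub] at hsub
  rw [Real.norm_eq_abs, abs_le]
  constructor <;> linarith

variable [FiniteDimensional ℝ E]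

lemma isCompact_steepMajorants_inter (hΩ : IsOpen Ω) (hu : MapsTo u Ω (Icc m M)) (hx : x ∈ Ω) :
    IsCompact (steepMajorants Ω u ∩ {q | q.1 x + q.2 ≤ M}) := by
  obtain ⟨r, hr, hball⟩ := Metric.nhds_basis_closedBall.mem_iff.1 (hΩ.mem_nhds hx)
  let K := Metric.closedBall (0 : E →L[ℝ] ℝ) ((M - m) / r) ×ˢ Icc m M
  have hK : IsCompact ((fun q : (E →L[ℝ] ℝ) × ℝ => (q.1, q.2 - q.1 x)) '' K) :=
    ((isCompact_closedBall _ _).prod isCompact_Icc).image (by fun_prop)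
  refine hK.of_isClosed_subset ((isClosed_steepMajorants Ω u).inter
    (isClosed_le (by fun_prop) continuous_const)) ?_
  rintro ⟨p, c⟩ ⟨hq, hqM⟩
  have hm : ∀ y ∈ Ω, m ≤ p y + c := fun y hy => (hu hy).1.trans (hq.2 y hy)
  refine ⟨(p, p x + c), ⟨?_, hm x hx, hqM⟩, by simp⟩
  simpa using norm_le_of_affine_ge hr (fun y hy => hm y (hball hy)) hqM

lemma exists_steepHull_eq (hΩ : IsOpen Ω) (hu : MapsTo u Ω (Icc m M)) (hx : x ∈ Ω) :
    ∃ q ∈ steepMajorants Ω u, steepHull Ω u x = q.1 x + q.2 := by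
  obtain ⟨q, hq, hmin⟩ := (isCompact_steepMajorants_inter hΩ hu hx).exists_isMinOn
    ⟨(0, M), zero_mem_steepMajorants hu, by simp⟩
    (f := fun q => q.1 x + q.2) (by fun_prop)
  refine ⟨q, hq.1, IsLeast.csInf_eq ⟨mem_image_of_mem _ hq.1, ?_⟩⟩
  rintro _ ⟨q', hq', rfl⟩
  rcases le_total (q'.1 x + q'.2) M with hle | hge
  · exact hmin ⟨hq', hle⟩
  · exact hq.2.trans hge

lemma concaveOn_steepHull (hΩ : IsOpen Ω) (hconv : Convex ℝ Ω) (hu : MapsTo u Ω (Icc m M)) :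
    ConcaveOn ℝ Ω (steepHull Ω u) := by
  refine ⟨hconv, fun x hx y hy a b ha hb hab => ?_⟩
  obtain ⟨q, hq, heq⟩ := exists_steepHull_eq hΩ hu (hconv hx hy ha hb hab)
  calc a • steepHull Ω u x + b • steepHull Ω u y
      ≤ a • (q.1 x + q.2) + b • (q.1 y + q.2) := by
        gcongr
        exacts [steepHull_le hx hq, steepHull_le hy hq]
    _ = q.1 (a • x + b • y) + (a + b) * q.2 := by
        simp only [map_add, map_smul, smul_eq_mul]
        ring
    _ = steepHull Ω u (a • x + b • y) := by rw [heq, hab, one_mul]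

lemma norm_fderiv_notMem_Ioo_of_eq_steepHull (hΩ : IsOpen Ω) (hu : MapsTo u Ω (Icc m M))
    (hx : x ∈ Ω) (hd : DifferentiableAt ℝ u x) (heq : u x = steepHull Ω u x) :
    ‖fderiv ℝ u x‖ ∉ Ioo (0 : ℝ) 1 := by
  obtain ⟨q, hq, hqx⟩ := exists_steepHull_eq hΩ hu hx
  rw [fderiv_eq_of_le_affine hΩ hx hd hq.2 (heq.trans hqx)]
  exact hq.1

lemma norm_fderiv_mem_Ioo_of_lt_steepHull (hΩ : IsOpen Ω) (hu : ConcaveOn ℝ Ω u) (hx : x ∈ Ω)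
    (hd : DifferentiableAt ℝ u x) (hlt : u x < steepHull Ω u x) :
    ‖fderiv ℝ u x‖ ∈ Ioo (0 : ℝ) 1 := by
  obtain ⟨p, c, hle, heq⟩ := exists_affine_ge_of_concaveOn hΩ hu hx
  rw [fderiv_eq_of_le_affine hΩ hx hd hle heq]
  by_contra hp
  exact hlt.not_ge (heq ▸ steepHull_le hx (q := (p, c)) ⟨hp, hle⟩)

lemma norm_fderiv_steepHull_of_lt (hΩ : IsOpen Ω) (hu : ConcaveOn ℝ Ω u)
    (hum : MapsTo u Ω (Icc m M)) (hx : x ∈ Ω) (hd : DifferentiableAt ℝ (steepHull Ω u) x)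
    (hlt : u x < steepHull Ω u x) :
    ‖fderiv ℝ (steepHull Ω u) x‖ = 0 ∨ ‖fderiv ℝ (steepHull Ω u) x‖ = 1 := by
  obtain ⟨q, hq, hqx⟩ := exists_steepHull_eq hΩ hum hx
  obtain ⟨p₀, c₀, hle, heq⟩ := exists_affine_ge_of_concaveOn hΩ hu hx
  rw [fderiv_eq_of_le_affine hΩ hx hd (fun y hy => steepHull_le hy hq) hqx]
  exact norm_eq_zero_or_eq_one_of_lt_steepHull hx hlt hq hqx hle heq

lemma steepHull_le_add_two_mul_dist (hΩ : IsOpen Ω) (hu : ConcaveOn ℝ Ω u)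
    (hx : x ∈ Ω) {y : E} (hy : y ∉ Ω) : steepHull Ω u x ≤ u x + 2 * dist x y := by
  obtain ⟨p, c, hle, heq⟩ := exists_affine_ge_of_concaveOn hΩ hu hx
  obtain ⟨z, hz, hzy⟩ := exists_norm_eq_one_forall_lt hΩ hu.1 ⟨x, hx⟩ hy
  by_cases hp : ‖p‖ ∈ Ioo (0 : ℝ) 1
  · have hq : (p - (2 : ℝ) • z, c + 2 * z y) ∈ steepMajorants Ω u := by
      refine ⟨fun h => h.2.not_ge ?_, fun w hw => ?_⟩
      · have h := norm_sub_norm_le ((2 : ℝ) • z) p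
        rw [norm_smul, hz, norm_sub_rev, Real.norm_two] at h
        linarith [hp.2]
      · simp only [sub_apply, smul_apply, smul_eq_mul]
        linarith [hle w hw, hzy w hw]
    have hzle : z y - z x ≤ dist x y := by
      rw [← map_sub, dist_comm, dist_eq_norm]
      simpa [hz] using (le_abs_self _).trans (z.le_opNorm (y - x))
    have h := steepHull_le hx hq
    simp only [sub_apply, smul_apply, smul_eq_mul] at h
    linarith
  · have h := steepHull_le hx (q := (p, c)) ⟨hp, hle⟩
    linarith [dist_nonneg (x := x) (y := y)]

lemma tendsto_steepHull_sub (hΩ : IsOpen Ω) (hu : ConcaveOn ℝ Ω u) (hum : MapsTo u Ω (Icc m M))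
    {y : E} (hy : y ∉ Ω) :
    Filter.Tendsto (steepHull Ω u - u) (𝓝[Ω] y) (𝓝 0) := by
  have hdist : Filter.Tendsto (fun x => 2 * dist x y) (𝓝[Ω] y) (𝓝 0) := by
    simpa using ((continuous_id.dist (continuous_const (y := y))).tendsto y).const_mul 2
      |>.mono_left nhdsWithin_le_nhds
  refine tendsto_of_tendsto_of_tendsto_of_le_of_le' tendsto_const_nhds hdist ?_ ?_
  · filter_upwards [self_mem_nhdsWithin] with x hx using sub_nonneg.2 (le_steepHull hum hx)
  · filter_upwards [self_mem_nhdsWithin] with x hx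
    exact sub_le_iff_le_add'.2 (steepHull_le_add_two_mul_dist hΩ hu hx hy)

end SteepHull

section Resistance

lemma norm_gradient {E : Type*} [NormedAddCommGroup E] [InnerProductSpace ℝ E] [CompleteSpace E]
    (u : E → ℝ) (x : E) : ‖gradient u x‖ = ‖fderiv ℝ u x‖ :=
  (InnerProductSpace.toDual ℝ E).symm.norm_map _

variable {E : Type*} [NormedAddCommGroup E] [InnerProductSpace ℝ E] [FiniteDimensional ℝ E]
  {Ω : Set E} {u v : E → ℝ} {m M : ℝ}

lemma one_lt_one_div_sq_add_one_add_half {p : ℝ} (hp : p ∈ Ioo (0 : ℝ) 1) :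
    1 < 1 / (p ^ 2 + 1) + p / 2 := by
  have hfactor : 1 / (p ^ 2 + 1) + p / 2 = 1 + p * (1 - p) ^ 2 / (2 * (p ^ 2 + 1)) := by
    field_simp
    ring
  have := mul_pos hp.1 (pow_pos (sub_pos.2 hp.2) 2)
  rw [hfactor]
  exact lt_add_of_pos_right 1 (by positivity)

lemma resistance_integrand_add_half_steepHull_lt (hΩ : IsOpen Ω) (hu : ConcaveOn ℝ Ω u)
    (hum : MapsTo u Ω (Icc m M)) {x : E} (hx : x ∈ Ω) (hd : DifferentiableAt ℝ u x)
    (hd' : DifferentiableAt ℝ (steepHull Ω u) x) (hlt : u x < steepHull Ω u x) :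
    1 / (‖gradient (steepHull Ω u) x‖ ^ 2 + 1) + ‖gradient (steepHull Ω u) x‖ / 2 <
      1 / (‖gradient u x‖ ^ 2 + 1) + ‖gradient u x‖ / 2 := by
  rw [norm_gradient, norm_gradient]
  calc 1 / (‖fderiv ℝ (steepHull Ω u) x‖ ^ 2 + 1) + ‖fderiv ℝ (steepHull Ω u) x‖ / 2 = 1 := by
        rcases norm_fderiv_steepHull_of_lt hΩ hu hum hx hd' hlt with h | h <;> rw [h] <;> norm_num
    _ < 1 / (‖fderiv ℝ u x‖ ^ 2 + 1) + ‖fderiv ℝ u x‖ / 2 :=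
        one_lt_one_div_sq_add_one_add_half
          (norm_fderiv_mem_Ioo_of_lt_steepHull hΩ hu hx hd hlt)

lemma frequently_ae_restrict_lt {X : Type*} [TopologicalSpace X] [MeasurableSpace X]
    {μ : Measure X} [μ.IsOpenPosMeasure] {s : Set X} {f g : X → ℝ} {x : X} (hs : IsOpen s)
    (hf : ContinuousOn f s) (hg : ContinuousOn g s) (hx : x ∈ s) (hlt : f x < g x) :
    ∃ᵐ y ∂μ.restrict s, f y < g y := by
  rw [frequently_ae_iff]
  refine ((Measure.measure_pos_of_mem_nhds (x := x) μ ?_).trans_le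
    (Measure.le_restrict_apply s _)).ne'
  have hs_nhds := hs.mem_nhds hx
  exact Filter.inter_mem ((hf.continuousAt hs_nhds).eventually_lt (hg.continuousAt hs_nhds) hlt)
    hs_nhds

lemma integral_lt_integral_of_ae_le {X : Type*} [MeasurableSpace X] {μ : Measure X} {f g : X → ℝ}
    (hf : Integrable f μ) (hg : Integrable g μ) (hle : f ≤ᵐ[μ] g) (hlt : ∃ᵐ x ∂μ, f x < g x) :
    ∫ x, f x ∂μ < ∫ x, g x ∂μ := by
  refine (integral_mono_ae hf hg hle).lt_of_ne fun heq => ?_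
  rw [integral_eq_iff_of_ae_le hf hg hle] at heq
  obtain ⟨x, hlt, heq⟩ := (hlt.and_eventually heq).exists
  exact hlt.ne heq

variable [MeasurableSpace E] [BorelSpace E]

lemma lintegral_enorm_fderiv_le_of_concaveOn_of_le {μ : Measure E} [μ.IsAddHaarMeasure]
    (hΩ : IsOpen Ω) (hb : Bornology.IsBounded Ω) (hu : ConcaveOn ℝ Ω u)
    (hv : LocallyLipschitzOn Ω v) (huv : ∀ x ∈ Ω, u x ≤ v x)
    (hlim : ∀ x ∈ frontier Ω, Filter.Tendsto (v - u) (𝓝[Ω] x) (𝓝 0)) :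
    ∫⁻ x in Ω, ‖fderiv ℝ u x‖ₑ ∂μ ≤ ∫⁻ x in Ω, ‖fderiv ℝ v x‖ₑ ∂μ :=
  lintegral_enorm_le_of_forall_apply_le (measurable_fderiv ℝ u) (measurable_fderiv ℝ v)
    (lintegral_enorm_fderiv_apply_le_of_concaveOn_of_le hΩ hb hu hv huv hlim)

/-- Newton's resistance functional `∫_Ω 1/(|∇u|² + 1)` over a set `Ω`. -/
noncomputable def resistance (Ω : Set E) (u : E → ℝ) : ℝ :=
  ∫ x in Ω, 1 / (‖gradient u x‖ ^ 2 + 1)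

lemma integrableOn_resistance_integrand (hb : Bornology.IsBounded Ω) (u : E → ℝ) :
    IntegrableOn (fun x => 1 / (‖gradient u x‖ ^ 2 + 1)) Ω := by
  simp_rw [norm_gradient]
  have hmeas : Measurable fun x => 1 / (‖fderiv ℝ u x‖ ^ 2 + 1) := by
    have := measurable_fderiv ℝ u
    fun_prop
  refine IntegrableOn.of_bound hb.measure_lt_top hmeas.aestronglyMeasurable 1
    (.of_forall fun x => ?_)
  rw [Real.norm_of_nonneg (by positivity), div_le_one (by positivity)]
  exact le_add_of_nonneg_left (sq_nonneg _)

lemma integrableOn_norm_gradient (hΩ : IsOpen Ω) (hb : Bornology.IsBounded Ω)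
    (hu : ConcaveOn ℝ Ω u) (hum : MapsTo u Ω (Icc m M)) :
    IntegrableOn (fun x => ‖gradient u x‖) Ω := by
  simp_rw [norm_gradient]
  exact Integrable.norm ⟨(measurable_fderiv ℝ u).aestronglyMeasurable,
    lintegral_enorm_fderiv_lt_top hΩ hb hu hum⟩

lemma integral_norm_gradient_le_steepHull (hΩ : IsOpen Ω) (hb : Bornology.IsBounded Ω)
    (hu : ConcaveOn ℝ Ω u) (hum : MapsTo u Ω (Icc m M)) :
    ∫ x in Ω, ‖gradient u x‖ ≤ ∫ x in Ω, ‖gradient (steepHull Ω u) x‖ := by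
  have hv := concaveOn_steepHull hΩ hu.1 hum
  simp_rw [norm_gradient]
  rw [integral_norm_eq_lintegral_enorm (measurable_fderiv ℝ u).aestronglyMeasurable,
    integral_norm_eq_lintegral_enorm (measurable_fderiv ℝ _).aestronglyMeasurable]
  refine ENNReal.toReal_mono (lintegral_enorm_fderiv_lt_top hΩ hb hv (mapsTo_steepHull hum)).ne ?_
  refine lintegral_enorm_fderiv_le_of_concaveOn_of_le hΩ hb hu (hv.locallyLipschitzOn hΩ)
    (fun x hx => le_steepHull hum hx) fun y hy => ?_
  rw [hΩ.frontier_eq] at hy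
  exact tendsto_steepHull_sub hΩ hu hum hy.2

lemma integral_resistance_integrand_add_half_steepHull_lt (hΩ : IsOpen Ω)
    (hb : Bornology.IsBounded Ω) (hu : ConcaveOn ℝ Ω u) (hum : MapsTo u Ω (Icc m M)) {x : E}
    (hx : x ∈ Ω) (hlt : u x < steepHull Ω u x) :
    ∫ y in Ω, (1 / (‖gradient (steepHull Ω u) y‖ ^ 2 + 1) + ‖gradient (steepHull Ω u) y‖ / 2) <
      ∫ y in Ω, (1 / (‖gradient u y‖ ^ 2 + 1) + ‖gradient u y‖ / 2) := by
  have hv := concaveOn_steepHull hΩ hu.1 hum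
  have hae : ∀ᵐ y ∂volume.restrict Ω,
      y ∈ Ω ∧ DifferentiableAt ℝ u y ∧ DifferentiableAt ℝ (steepHull Ω u) y :=
    (ae_restrict_mem hΩ.measurableSet).and
      ((ae_differentiableAt_of_locallyLipschitzOn hΩ (hu.locallyLipschitzOn hΩ)).and
        (ae_differentiableAt_of_locallyLipschitzOn hΩ (hv.locallyLipschitzOn hΩ)))
  refine integral_lt_integral_of_ae_le
    ((integrableOn_resistance_integrand hb _).add
      ((integrableOn_norm_gradient hΩ hb hv (mapsTo_steepHull hum)).div_const 2))
    ((integrableOn_resistance_integrand hb u).add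
      ((integrableOn_norm_gradient hΩ hb hu hum).div_const 2)) ?_ ?_
  · filter_upwards [hae] with y ⟨hy, hdu, hdv⟩
    rcases (le_steepHull hum hy).eq_or_lt with heq | hlt
    · simp only [norm_gradient, fderiv_eq_of_le_of_eq hΩ hy hdu hdv
        (fun _ hz => le_steepHull hum hz) heq, le_refl]
    · exact (resistance_integrand_add_half_steepHull_lt hΩ hu hum hy hdu hdv hlt).le
  · have hfreq := frequently_ae_restrict_lt (μ := volume) hΩ (hu.continuousOn hΩ)
      (hv.continuousOn hΩ) hx hlt
    refine (hfreq.and_eventually hae).mono fun y ⟨hlt, hy, hdu, hdv⟩ => ?_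
    exact resistance_integrand_add_half_steepHull_lt hΩ hu hum hy hdu hdv hlt

lemma resistance_steepHull_lt (hΩ : IsOpen Ω) (hb : Bornology.IsBounded Ω)
    (hu : ConcaveOn ℝ Ω u) (hum : MapsTo u Ω (Icc m M)) {x : E} (hx : x ∈ Ω)
    (hlt : u x < steepHull Ω u x) : resistance Ω (steepHull Ω u) < resistance Ω u := by
  have hv := concaveOn_steepHull hΩ hu.1 hum
  have hsum := integral_resistance_integrand_add_half_steepHull_lt hΩ hb hu hum hx hlt
  have hvariation := integral_norm_gradient_le_steepHull hΩ hb hu hum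
  rw [integral_add (integrableOn_resistance_integrand hb _)
      ((integrableOn_norm_gradient hΩ hb hv (mapsTo_steepHull hum)).div_const 2),
    integral_add (integrableOn_resistance_integrand hb u)
      ((integrableOn_norm_gradient hΩ hb hu hum).div_const 2),
    integral_div, integral_div] at hsum
  rw [resistance, resistance]
  linarith

theorem minimizer_gradient_norm_not_intermediate_general (hΩ : IsOpen Ω)
    (hb : Bornology.IsBounded Ω) (hu : ConcaveOn ℝ Ω u) (hum : MapsTo u Ω (Icc m M))
    (hmin : ∀ v : E → ℝ, ConcaveOn ℝ Ω v → MapsTo v Ω (Icc m M) →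
      resistance Ω u ≤ resistance Ω v) :
    ∀ x ∈ Ω, DifferentiableAt ℝ u x → ‖gradient u x‖ ∉ Ioo (0 : ℝ) 1 := by
  intro x hx hd
  have hcontact : u x = steepHull Ω u x := by
    refine (le_steepHull hum hx).eq_of_not_lt fun hlt => ?_
    exact (resistance_steepHull_lt hΩ hb hu hum hx hlt).not_ge
      (hmin _ (concaveOn_steepHull hΩ hu.1 hum) (mapsTo_steepHull hum))
  rw [norm_gradient]
  exact norm_fderiv_notMem_Ioo_of_eq_steepHull hΩ hum hx hd hcontact

end Resistance

/-- A minimizer of Newton's problem has no gradient of intermediate slope: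
at every point of differentiability, `|∇u(x)| ∉ (0, 1)`. -/
theorem minimizer_gradient_norm_not_intermediate (M : ℝ) (hM : 0 < M)
    (u : EuclideanSpace ℝ (Fin 2) → ℝ)
    (hu : ConcaveOn ℝ Omega u) (huM : ∀ x ∈ Omega, u x ∈ Icc 0 M)
    (hmin : ∀ v : EuclideanSpace ℝ (Fin 2) → ℝ,
      ConcaveOn ℝ Omega v → (∀ x ∈ Omega, v x ∈ Icc 0 M) → J u ≤ J v) :
    ∀ x ∈ Omega, DifferentiableAt ℝ u x → ‖gradient u x‖ ∉ Ioo (0 : ℝ) 1 :=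
  minimizer_gradient_norm_not_intermediate_general Metric.isOpen_ball Metric.isBounded_ball
    hu huM hmin
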